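/- Let (X, d) be a complete separable metric space with a distinguished point p ∈ X, let S ⊆ X be a closed set with empty interior, and let N < 0. For k ∈ ℕ set R^k := {x ∈ X : d(x, p) ≤ 2^{k+1} and d(x, S) ≥ 2^{−(k+1)}} (with d(x, ∅) = +∞). Let {m_n}_{n ∈ ℕ ∪ {∞}} be Borel measures on X with m_n(S) = 0 and m_n(R^k) < ∞ for every n and k, and let {μ_n}_{n ∈ ℕ ∪ {∞}} be Borel probability measures on X with μ_n(S) = 0 for every n. Assume that ∫ f dm_n → ∫ f dm_∞ for every bounded continuous function f : X → ℝ with bounded support that vanishes on some open neighborhood of S, and that μ_n converges weakly to μ_∞ (i.e. ∫ g dμ_n → ∫ g dμ_∞ for every bounded continuous g : X → ℝ). Then S_{N,m_∞}(μ_∞) ≤ liminf_{n → ∞} S_{N,m_n}(μ_n). -/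

import Mathlib

/-!
Put `r = 1 - 1/N > 1`. Young's inequality `r a^(r-1) ρ ≤ ρ^r + (r-1) a^r`, an equality for `a = ρ`,
gives for every measurable `f ≥ 0` the dual bound

  `r ∫ f^(r-1) dμ ≤ S_{N,m}(μ) + (r-1) ∫ f^r dm`   (`lintegral_le_renyiEntropy_add`).

When `f` is bounded, continuous and supported in some `R^k`, both integrals pass to the limit along
the two sequences, so the same bound holds for the limit measures with `L = liminf S_{N,m_n}(μ_n)`
in place of the entropy (`dual_bound_continuous`). Density of continuous functions in `L¹`, together
with a cutoff between `R^k` and `R^{k+1}`, extends it to bounded Borel `f` supported in `R^k`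
(`dual_bound_measurable`).

Assume `L < ∞`. Taking `f = t 1_E` with `E ⊆ R^k`, `m_∞(E) = 0`, and letting `t → ∞` yields
`μ_∞ ≪ m_∞`, since `μ_∞(S) = 0` and the `R^k` cover the complement of `S`. As
`m_∞` is σ-finite, `μ_∞` has a density `ρ`, and taking `f = min(ρ, k) 1_{R^k}` gives
`∫ f^r dm_∞ ≤ L`, because `f^(r-1) ρ ≥ f^r`. Monotone convergence in `k` concludes.
-/

open MeasureTheory Set ENNReal NNReal Filter

open Classical in
/-- The Rényi entropy `S_{N,m}(μ)` for `N < 0`: it equals `∫ ρ^{1-1/N} dm` if `μ = ρ·m`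
is absolutely continuous with respect to `m` with density `ρ`, and `+∞` otherwise. -/
noncomputable def renyiEntropy {X : Type*} [MeasurableSpace X]
    (N : ℝ) (m μ : Measure X) : ℝ≥0∞ :=
  if h : ∃ ρ : X → ℝ≥0∞, Measurable ρ ∧ μ = m.withDensity ρ
  then ∫⁻ x, (h.choose x) ^ (1 - 1 / N) ∂m
  else ⊤

/-- The `k`-th regular set `R^k = {x : d(x,p) ≤ 2^{k+1}, d(x,S) ≥ 2^{-(k+1)}}`
(with the convention `d(x,∅) = +∞`). -/
def regSet {X : Type*} [MetricSpace X] (p : X) (S : Set X) (k : ℕ) : Set X :=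
  {x : X | dist x p ≤ 2 ^ (k + 1) ∧ ∀ s ∈ S, (2 : ℝ) ^ (-(k + 1 : ℤ)) ≤ dist x s}

/-! ### Young's inequality and the dual bound for the entropy -/

/-- Young's inequality, normalised so that equality holds for `a = x`. -/
lemma young_rpow {r : ℝ} (hr : 1 < r) (a : ℝ≥0) (x : ℝ≥0∞) :
    ENNReal.ofReal r * (a : ℝ≥0∞) ^ (r - 1) * x
      ≤ x ^ r + ENNReal.ofReal (r - 1) * (a : ℝ≥0∞) ^ r := by
  have hr0 : 0 < r := by linarith
  have hr1 : 0 < r - 1 := by linarith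
  rcases eq_or_ne x ⊤ with rfl | hx
  · simp [ENNReal.top_rpow_of_pos hr0]
  lift x to ℝ≥0 using hx
  have key : r * (a : ℝ) ^ (r - 1) * x ≤ (x : ℝ) ^ r + (r - 1) * (a : ℝ) ^ r := by
    have hc : r.HolderConjugate (r / (r - 1)) := Real.HolderConjugate.conjExponent hr
    have h := Real.young_inequality_of_nonneg (a := (x : ℝ)) (b := (a : ℝ) ^ (r - 1))
      x.coe_nonneg (by positivity) hc
    rw [← Real.rpow_mul a.coe_nonneg, show (r - 1) * (r / (r - 1)) = r by field_simp] at h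
    have h2 := mul_le_mul_of_nonneg_left h hr0.le
    have e : r * ((x : ℝ) ^ r / r + (a : ℝ) ^ r / (r / (r - 1)))
        = (x : ℝ) ^ r + (r - 1) * (a : ℝ) ^ r := by
      field_simp
    rw [e] at h2
    linarith
  have e1 : ∀ (y : ℝ≥0) (t : ℝ), 0 < t → (y : ℝ≥0∞) ^ t = ENNReal.ofReal ((y : ℝ) ^ t) := by
    intro y t ht
    rw [← ENNReal.ofReal_rpow_of_nonneg y.coe_nonneg ht.le, ENNReal.ofReal_coe_nnreal]
  rw [e1 a _ hr1, e1 x _ hr0, e1 a _ hr0, ← ENNReal.ofReal_coe_nnreal (p := x),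
    ← ENNReal.ofReal_mul hr0.le, ← ENNReal.ofReal_mul (by positivity),
    ← ENNReal.ofReal_mul hr1.le, ← ENNReal.ofReal_add (by positivity) (by positivity)]
  exact ENNReal.ofReal_le_ofReal key

/-- The dual bound: integrate `young_rpow` at `a = f`, `x = ρ` against `m`. -/
lemma lintegral_le_renyiEntropy_add {X : Type*} [MeasurableSpace X] {N : ℝ} (hN : N < 0)
    (m μ : Measure X) (f : X → ℝ≥0) (hf : Measurable f) :
    ∫⁻ x, ENNReal.ofReal (1 - 1 / N) * (f x : ℝ≥0∞) ^ (1 - 1 / N - 1) ∂μ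
      ≤ renyiEntropy N m μ
        + ∫⁻ x, ENNReal.ofReal (1 - 1 / N - 1) * (f x : ℝ≥0∞) ^ (1 - 1 / N) ∂m := by
  have hr : 1 < 1 - 1 / N := by
    have : 1 / N < 0 := one_div_neg.mpr hN
    linarith
  unfold renyiEntropy
  split_ifs with h
  · have hρ := h.choose_spec.1
    have hμ := h.choose_spec.2
    generalize h.choose = ρ at hρ hμ
    rw [hμ, lintegral_withDensity_eq_lintegral_mul _ hρ (by fun_prop),
      ← lintegral_add_left (by fun_prop)]
    refine lintegral_mono fun x => ?_
    simp only [Pi.mul_apply]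
    rw [mul_comm]
    exact young_rpow hr (f x) (ρ x)
  · simp

/-! ### Regular sets -/

section regSet

variable {X : Type*} [MetricSpace X] (p : X) (S : Set X)

lemma regSet_eq (k : ℕ) : regSet p S k =
    Metric.closedBall p (2 ^ (k + 1)) ∩ (Metric.thickening ((2 : ℝ) ^ (-(k + 1 : ℤ))) S)ᶜ := by
  ext x
  simp [regSet, Metric.mem_thickening_iff]

lemma isClosed_regSet (k : ℕ) : IsClosed (regSet p S k) := by
  rw [regSet_eq]
  exact Metric.isClosed_closedBall.inter Metric.isOpen_thickening.isClosed_compl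

lemma regSet_mono {k l : ℕ} (h : k ≤ l) : regSet p S k ⊆ regSet p S l := by
  rintro x ⟨h1, h2⟩
  refine ⟨h1.trans (pow_le_pow_right₀ (by norm_num) (by omega)), fun s hs => le_trans ?_ (h2 s hs)⟩
  exact zpow_le_zpow_right₀ (by norm_num) (by omega)

lemma exists_mem_regSet (hS : IsClosed S) {x : X} (hx : x ∉ S) : ∃ k, x ∈ regSet p S k := by
  obtain ⟨ε, hε, hb⟩ := Metric.isOpen_iff.1 hS.isOpen_compl x hx
  obtain ⟨a, ha⟩ := pow_unbounded_of_one_lt (dist x p) (one_lt_two : (1 : ℝ) < 2)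
  obtain ⟨b, hb'⟩ := exists_pow_lt_of_lt_one hε (by norm_num : (1 / 2 : ℝ) < 1)
  refine ⟨max a b, ?_, fun s hs => ?_⟩
  · exact ha.le.trans (pow_le_pow_right₀ (by norm_num) (by omega))
  · have h1 : ε ≤ dist x s := by
      by_contra! h
      exact hb (by rwa [Metric.mem_ball, dist_comm]) hs
    refine le_trans (le_trans ?_ hb'.le) h1
    rw [one_div, inv_pow, ← zpow_natCast, ← zpow_neg]
    exact zpow_le_zpow_right₀ (by norm_num) (by omega)

lemma thickening_regSet_subset (k : ℕ) :
    Metric.thickening ((2 : ℝ) ^ (-(k + 2 : ℤ))) (regSet p S k) ⊆ regSet p S (k + 1) := by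
  intro x hx
  obtain ⟨y, hy, hxy⟩ := Metric.mem_thickening_iff.1 hx
  have e : (2 : ℝ) ^ (-(k + 1 : ℤ)) = 2 * (2 : ℝ) ^ (-(k + 2 : ℤ)) := by
    rw [show (-(k + 1 : ℤ)) = 1 + -(k + 2 : ℤ) by ring, zpow_add₀ (by norm_num), zpow_one]
  have l1 : (2 : ℝ) ^ (-(k + 2 : ℤ)) ≤ 1 := by
    apply zpow_le_one_of_nonpos₀ (by norm_num) (by omega)
  refine ⟨?_, fun s hs => ?_⟩
  · have := dist_triangle x y p
    have h1 := hy.1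
    have h2 : (1 : ℝ) ≤ 2 ^ (k + 1) := one_le_pow₀ (by norm_num)
    have h3 : (2 : ℝ) ^ (k + 1 + 1) = 2 * 2 ^ (k + 1) := by ring
    linarith
  · have h1 := hy.2 s hs
    have h2 := dist_triangle_left y s x
    push_cast
    rw [show (-((k : ℤ) + 1 + 1)) = -(k + 2 : ℤ) by ring]
    linarith

end regSet

/-! ### The dual bound for the limit measures -/

section dual

variable {X : Type*} [MetricSpace X] [MeasurableSpace X]

lemma integrable_of_regSet {p : X} {S : Set X} {k : ℕ} (m : Measure X)
    (hm : m (regSet p S k) < ⊤) {g : X → ℝ} (hg : Measurable g) (C : ℝ) (hC : ∀ x, |g x| ≤ C)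
    (h0 : ∀ x ∉ regSet p S k, g x = 0) : Integrable g m := by
  rw [← integrableOn_iff_integrable_of_support_subset (s := regSet p S k)]
  · exact Measure.integrableOn_of_bounded hm.ne hg.aestronglyMeasurable (M := C)
      (Eventually.of_forall hC)
  · intro x hx
    by_contra h
    exact hx (h0 x h)

lemma sigmaFinite_of_regSet {p : X} {S : Set X} (hS : IsClosed S) (m : Measure X)
    (hmS : m S = 0) (hmR : ∀ k, m (regSet p S k) < ⊤) : SigmaFinite m := by
  refine ⟨⟨⟨fun k => S ∪ regSet p S k, fun _ => trivial, fun k => ?_, ?_⟩⟩⟩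
  · exact (measure_union_le _ _).trans_lt (by rw [hmS, zero_add]; exact hmR k)
  · refine eq_univ_of_forall fun x => mem_iUnion.2 ?_
    by_cases hxS : x ∈ S
    · exact ⟨0, Or.inl hxS⟩
    · obtain ⟨k, hk⟩ := exists_mem_regSet p S hS hxS
      exact ⟨k, Or.inr hk⟩

variable [BorelSpace X]

/-- The integrals `∫ c f^t` converge as soon as the corresponding Bochner integrals do. -/
lemma tendsto_lintegral_rpow {p : X} {S : Set X} {k : ℕ} (m : ℕ → Measure X) (mLim : Measure X)
    (hm : ∀ n, m n (regSet p S k) < ⊤) (hmL : mLim (regSet p S k) < ⊤)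
    {f : X → ℝ≥0} (hf : Continuous f) (M : ℝ≥0) (hM : ∀ x, f x ≤ M)
    (h0 : ∀ x ∉ regSet p S k, f x = 0) {t : ℝ} (ht : 0 < t) (c : ℝ≥0∞) (hc : c ≠ ⊤)
    (hconv : ∀ g : X → ℝ, Continuous g → (∃ C : ℝ, ∀ x, |g x| ≤ C) →
      (∀ x ∉ regSet p S k, g x = 0) →
      Tendsto (fun n => ∫ x, g x ∂(m n)) atTop (nhds (∫ x, g x ∂mLim))) :
    Tendsto (fun n => ∫⁻ x, c * (f x : ℝ≥0∞) ^ t ∂(m n)) atTop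
      (nhds (∫⁻ x, c * (f x : ℝ≥0∞) ^ t ∂mLim)) := by
  have hgc : Continuous fun x => (f x : ℝ) ^ t :=
    (NNReal.continuous_coe.comp hf).rpow_const fun _ => Or.inr ht.le
  have hgb : ∀ x, |(f x : ℝ) ^ t| ≤ (M : ℝ) ^ t := fun x => by
    rw [abs_of_nonneg (by positivity)]
    exact Real.rpow_le_rpow (f x).2 (hM x) ht.le
  have hg0 : ∀ x ∉ regSet p S k, (f x : ℝ) ^ t = 0 := fun x hx => by
    rw [h0 x hx, NNReal.coe_zero, Real.zero_rpow ht.ne']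
  have e : ∀ ν : Measure X, ν (regSet p S k) < ⊤ →
      ∫⁻ x, c * (f x : ℝ≥0∞) ^ t ∂ν = c * ENNReal.ofReal (∫ x, (f x : ℝ) ^ t ∂ν) := by
    intro ν hν
    rw [lintegral_const_mul' _ _ hc, ofReal_integral_eq_lintegral_ofReal
      (integrable_of_regSet ν hν hgc.measurable _ hgb hg0)
      (Eventually.of_forall fun x => by positivity)]
    congr 1
    refine lintegral_congr fun x => ?_
    rw [← ENNReal.ofReal_rpow_of_nonneg (f x).coe_nonneg ht.le, ENNReal.ofReal_coe_nnreal]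
  simp_rw [e _ (hm _), e _ hmL]
  exact ENNReal.Tendsto.const_mul
    (ENNReal.tendsto_ofReal (hconv _ hgc ⟨_, hgb⟩ hg0)) (Or.inr hc)

/-- The integrals `∫ c h_j^t` converge for uniformly bounded `h_j` supported in a common regular
set and converging almost everywhere there. -/
lemma tendsto_lintegral_rpow_of_ae {p : X} {S : Set X} {k : ℕ} (m : Measure X)
    (hm : m (regSet p S k) < ⊤) {h : ℕ → X → ℝ≥0} {f : X → ℝ≥0} (hh : ∀ j, Measurable (h j))
    (M : ℝ≥0) (hM : ∀ j x, h j x ≤ M) (hh0 : ∀ j, ∀ x ∉ regSet p S k, h j x = 0)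
    (hf0 : ∀ x ∉ regSet p S k, f x = 0)
    (hae : ∀ᵐ x ∂(m.restrict (regSet p S k)), Tendsto (fun j => h j x) atTop (nhds (f x)))
    {t : ℝ} (ht : 0 < t) (c : ℝ≥0∞) (hc : c ≠ ⊤) :
    Tendsto (fun j => ∫⁻ x, c * (h j x : ℝ≥0∞) ^ t ∂m) atTop
      (nhds (∫⁻ x, c * (f x : ℝ≥0∞) ^ t ∂m)) := by
  have hR : MeasurableSet (regSet p S k) := (isClosed_regSet p S k).measurableSet
  refine tendsto_lintegral_of_dominated_convergence
    ((regSet p S k).indicator fun _ => c * (M : ℝ≥0∞) ^ t) (fun j => by fun_prop) ?_ ?_ ?_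
  · intro j
    refine Eventually.of_forall fun x => ?_
    by_cases hx : x ∈ regSet p S k
    · rw [indicator_of_mem hx]
      beta_reduce
      gcongr
      exact hM j x
    · simp [hh0 j x hx, ENNReal.zero_rpow_of_pos ht]
  · rw [lintegral_indicator hR, setLIntegral_const]
    exact ENNReal.mul_ne_top (ENNReal.mul_ne_top hc (by simp [ht.le])) hm.ne
  · rw [ae_restrict_iff' hR] at hae
    filter_upwards [hae] with x hx
    by_cases hxR : x ∈ regSet p S k
    · refine ENNReal.Tendsto.const_mul ?_ (Or.inr hc)
      exact (ENNReal.continuous_rpow_const.tendsto _).comp (ENNReal.tendsto_coe.2 (hx hxR))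
    · simp [hh0 _ x hxR, hf0 x hxR]

/-- The dual bound for the limit measures, tested against continuous functions. -/
lemma dual_bound_continuous {p : X} {S : Set X} {N : ℝ} (hN : N < 0)
    (m : ℕ → Measure X) (mLim : Measure X) (μ : ℕ → Measure X) (μLim : Measure X)
    (hμprob : ∀ n, IsProbabilityMeasure (μ n)) (hμLimprob : IsProbabilityMeasure μLim)
    (hmR : ∀ n k, m n (regSet p S k) < ⊤) (hmLimR : ∀ k, mLim (regSet p S k) < ⊤)
    (hmconv : ∀ f : X → ℝ, Continuous f → (∃ C : ℝ, ∀ x, |f x| ≤ C) →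
      Bornology.IsBounded (Function.support f) →
      (∃ U : Set X, IsOpen U ∧ S ⊆ U ∧ ∀ x ∈ U, f x = 0) →
      Tendsto (fun n => ∫ x, f x ∂(m n)) atTop (nhds (∫ x, f x ∂mLim)))
    (hμconv : ∀ g : X → ℝ, Continuous g → (∃ C : ℝ, ∀ x, |g x| ≤ C) →
      Tendsto (fun n => ∫ x, g x ∂(μ n)) atTop (nhds (∫ x, g x ∂μLim)))
    (k : ℕ) {f : X → ℝ≥0} (hf : Continuous f) (M : ℝ≥0) (hM : ∀ x, f x ≤ M)
    (h0 : ∀ x ∉ regSet p S k, f x = 0) :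
    ∫⁻ x, ENNReal.ofReal (1 - 1 / N) * (f x : ℝ≥0∞) ^ (1 - 1 / N - 1) ∂μLim
      ≤ atTop.liminf (fun n => renyiEntropy N (m n) (μ n))
        + ∫⁻ x, ENNReal.ofReal (1 - 1 / N - 1) * (f x : ℝ≥0∞) ^ (1 - 1 / N) ∂mLim := by
  have hr : 0 < 1 - 1 / N - 1 := by
    have : 1 / N < 0 := one_div_neg.mpr hN
    linarith
  have hA := tendsto_lintegral_rpow μ μLim (fun n => measure_lt_top _ _) (measure_lt_top _ _)
    hf M hM h0 hr (ENNReal.ofReal (1 - 1 / N)) ENNReal.ofReal_ne_top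
    (fun g hg hb _ => hμconv g hg hb)
  have hB := tendsto_lintegral_rpow m mLim (fun n => hmR n k) (hmLimR k)
    hf M hM h0 (by linarith : 0 < 1 - 1 / N) (ENNReal.ofReal (1 - 1 / N - 1))
    ENNReal.ofReal_ne_top (fun g hg hb hg0 => by
      refine hmconv g hg hb ?_ ⟨_, Metric.isOpen_thickening,
        Metric.self_subset_thickening (by positivity : (0 : ℝ) < 2 ^ (-(k + 1 : ℤ))) S, ?_⟩
      · refine (Metric.isBounded_closedBall (x := p) (r := 2 ^ (k + 1))).subset fun x hx => ?_
        by_contra h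
        exact hx (hg0 x fun h' => h h'.1)
      · intro x hx
        refine hg0 x fun h => ?_
        rw [regSet_eq] at h
        exact h.2 hx)
  have hBfin : ∫⁻ x, ENNReal.ofReal (1 - 1 / N - 1) * (f x : ℝ≥0∞) ^ (1 - 1 / N) ∂mLim ≠ ⊤ := by
    have hR := (isClosed_regSet p S k).measurableSet
    refine ne_top_of_le_ne_top (b := ∫⁻ x, (regSet p S k).indicator
      (fun _ => ENNReal.ofReal (1 - 1 / N - 1) * (M : ℝ≥0∞) ^ (1 - 1 / N)) x ∂mLim) ?_
      (lintegral_mono fun x => ?_)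
    · rw [lintegral_indicator hR, setLIntegral_const]
      exact ENNReal.mul_ne_top (ENNReal.mul_ne_top ENNReal.ofReal_ne_top
        (ENNReal.rpow_ne_top_of_nonneg (by linarith) ENNReal.coe_ne_top)) (hmLimR k).ne
    · by_cases hx : x ∈ regSet p S k
      · rw [indicator_of_mem hx]
        gcongr
        · linarith
        · exact hM x
      · rw [h0 x hx, ENNReal.coe_zero, ENNReal.zero_rpow_of_pos (by linarith)]
        simp
  have hsub := ENNReal.Tendsto.sub hA hB (Or.inr hBfin)
  rw [← tsub_le_iff_right, ← hsub.liminf_eq]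
  refine liminf_le_liminf (Eventually.of_forall fun n => ?_)
  rw [tsub_le_iff_right]
  exact lintegral_le_renyiEntropy_add hN _ _ f hf.measurable

/-- A dual bound valid for continuous test functions extends to bounded Borel ones
supported in some `R^k`: approximate in `L¹` on `R^{k+1}`, truncate, and multiply by a cutoff. -/
lemma dual_bound_measurable {p : X} {S : Set X} {r : ℝ} (hr : 1 < r) (L : ℝ≥0∞)
    (m μ : Measure X) [IsFiniteMeasure μ] (hmR : ∀ k, m (regSet p S k) < ⊤)
    (H : ∀ (k : ℕ) (f : X → ℝ≥0), Continuous f → ∀ M : ℝ≥0, (∀ x, f x ≤ M) →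
      (∀ x ∉ regSet p S k, f x = 0) →
      ∫⁻ x, ENNReal.ofReal r * (f x : ℝ≥0∞) ^ (r - 1) ∂μ
        ≤ L + ∫⁻ x, ENNReal.ofReal (r - 1) * (f x : ℝ≥0∞) ^ r ∂m)
    (k : ℕ) {f : X → ℝ≥0} (hf : Measurable f) (M : ℝ≥0) (hM : ∀ x, f x ≤ M)
    (h0 : ∀ x ∉ regSet p S k, f x = 0) :
    ∫⁻ x, ENNReal.ofReal r * (f x : ℝ≥0∞) ^ (r - 1) ∂μ
      ≤ L + ∫⁻ x, ENNReal.ofReal (r - 1) * (f x : ℝ≥0∞) ^ r ∂m := by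
  set R := regSet p S (k + 1) with hRdef
  have h0' : ∀ x ∉ R, f x = 0 := fun x hx => h0 x fun h => hx (regSet_mono p S (Nat.le_succ k) h)
  set ν := (m + μ).restrict R with hν
  have : IsFiniteMeasure ν := ⟨by
    rw [hν, Measure.restrict_apply_univ, Measure.add_apply]
    exact ENNReal.add_lt_top.2 ⟨hmR _, measure_lt_top _ _⟩⟩
  have hfi : Integrable (fun x => (f x : ℝ)) ν :=
    Integrable.of_bound (by fun_prop) (M : ℝ) (Eventually.of_forall fun x => by
      simpa using hM x)
  have hex : ∀ j : ℕ, ∃ g : BoundedContinuousFunction X ℝ,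
      ∫⁻ x, ‖(f x : ℝ) - g x‖ₑ ∂ν ≤ ((j : ℝ≥0∞) + 1)⁻¹ := fun j => by
    obtain ⟨g, hg, -⟩ := hfi.exists_boundedContinuous_lintegral_sub_le
      (ε := ((j : ℝ≥0∞) + 1)⁻¹) (by simp)
    exact ⟨g, hg⟩
  choose g hg using hex
  have hmeas : TendstoInMeasure ν (fun j x => g j x) atTop (fun x => (f x : ℝ)) := by
    refine tendstoInMeasure_of_tendsto_eLpNorm one_ne_zero
      (fun j => (g j).continuous.aestronglyMeasurable) (by fun_prop) ?_
    refine tendsto_of_tendsto_of_tendsto_of_le_of_le tendsto_const_nhds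
      (h := fun j : ℕ => ((j : ℝ≥0∞) + 1)⁻¹) ?_ (fun _ => zero_le) fun j => ?_
    · have := (tendsto_add_atTop_iff_nat 1).2 ENNReal.tendsto_inv_nat_nhds_zero
      simpa using this
    · rw [eLpNorm_one_eq_lintegral_enorm]
      refine le_trans (le_of_eq (lintegral_congr fun x => ?_)) (hg j)
      rw [Pi.sub_apply, enorm_sub_rev]
  obtain ⟨σ, -, hσ⟩ := hmeas.exists_seq_tendsto_ae
  have hδ : (0 : ℝ) < 2 ^ (-(k + 2 : ℤ)) := by positivity
  -- the cutoff: equal to one on `R^k`, zero outside `R^{k+1}`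
  set χ := thickenedIndicator hδ (regSet p S k) with hχ
  set h : ℕ → X → ℝ≥0 := fun j x => χ x * min M (Real.toNNReal (g (σ j) x)) with hh
  have hcont : ∀ j, Continuous (h j) := fun j =>
    χ.continuous.mul (continuous_const.min (continuous_real_toNNReal.comp (g (σ j)).continuous))
  have hhM : ∀ j x, h j x ≤ M := fun j x =>
    (mul_le_mul' (thickenedIndicator_le_one hδ _ x) (min_le_left _ _)).trans (one_mul M).le
  have hh0 : ∀ j, ∀ x ∉ R, h j x = 0 := fun j x hx => by
    have : χ x = 0 := thickenedIndicator_zero hδ _ fun hx' => hx (thickening_regSet_subset p S k hx')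
    simp [hh, this]
  have hχf : ∀ x, χ x * f x = f x := fun x => by
    by_cases hx : x ∈ regSet p S k
    · rw [hχ, thickenedIndicator_one hδ _ hx, one_mul]
    · rw [h0 x hx, mul_zero]
  have hae : ∀ᵐ x ∂ν, Tendsto (fun j => h j x) atTop (nhds (f x)) := by
    filter_upwards [hσ] with x hx
    have h1 := (continuous_real_toNNReal.tendsto _).comp hx
    rw [Real.toNNReal_coe] at h1
    have h2 := (tendsto_const_nhds (x := χ x)).mul ((tendsto_const_nhds (x := M)).min h1)
    rwa [min_eq_right (hM x), hχf] at h2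
  have hν' : ν = m.restrict R + μ.restrict R := Measure.restrict_add _ _ _
  rw [hν', ae_add_measure_iff] at hae
  refine le_of_tendsto_of_tendsto'
    (tendsto_lintegral_rpow_of_ae μ (measure_lt_top _ _) (fun j => (hcont j).measurable) M hhM hh0
      h0' hae.2 (by linarith) _ ENNReal.ofReal_ne_top)
    ((tendsto_lintegral_rpow_of_ae m (hmR _) (fun j => (hcont j).measurable) M hhM hh0
      h0' hae.1 (by linarith) _ ENNReal.ofReal_ne_top).const_add L)
    fun j => H (k + 1) (h j) (hcont j) M (hhM j) (hh0 j)

end dual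

/-! ### From the dual bound to the entropy of the limit -/

section conclusion

variable {X : Type*} [MetricSpace X] [MeasurableSpace X] [BorelSpace X]

/-- A measure satisfying the dual bound with finite `L` and not charging `S` is absolutely continuous:
test with multiples of the indicators of `E ∩ R^k`, where `m E = 0`. -/
lemma absolutelyContinuous_of_dual_bound {p : X} {S : Set X} (hS : IsClosed S) {r : ℝ}
    (hr : 1 < r) {L : ℝ≥0∞} (hL : L ≠ ⊤) (m μ : Measure X) (hμS : μ S = 0)
    (H : ∀ (k : ℕ) (f : X → ℝ≥0), Measurable f → ∀ M : ℝ≥0, (∀ x, f x ≤ M) →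
      (∀ x ∉ regSet p S k, f x = 0) →
      ∫⁻ x, ENNReal.ofReal r * (f x : ℝ≥0∞) ^ (r - 1) ∂μ
        ≤ L + ∫⁻ x, ENNReal.ofReal (r - 1) * (f x : ℝ≥0∞) ^ r ∂m) :
    μ ≪ m := by
  have hr1 : 0 < r - 1 := by linarith
  refine Measure.AbsolutelyContinuous.mk fun E hE hmE => ?_
  have key : ∀ k, μ (E ∩ regSet p S k) = 0 := by
    intro k
    have hA : MeasurableSet (E ∩ regSet p S k) :=
      hE.inter (isClosed_regSet p S k).measurableSet
    have hmA : m (E ∩ regSet p S k) = 0 := measure_mono_null inter_subset_left hmE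
    set A := E ∩ regSet p S k
    have hpow : ∀ (n : ℕ) (s : ℝ), 0 < s → ∀ x,
        ((A.indicator (fun _ => (n : ℝ≥0)) x : ℝ≥0) : ℝ≥0∞) ^ s
          = A.indicator (fun _ => (n : ℝ≥0∞) ^ s) x := by
      intro n s hs x
      by_cases hx : x ∈ A <;> simp [hx, hs]
    have hb : ∀ n : ℕ, ENNReal.ofReal r * ((n : ℝ≥0∞) ^ (r - 1) * μ A) ≤ L := by
      intro n
      have := H k (A.indicator fun _ => (n : ℝ≥0)) (measurable_const.indicator hA) n
        (fun x => indicator_le_self' (fun _ _ => zero_le) x)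
        (fun x hx => indicator_of_notMem (fun h => hx h.2) _)
      simp_rw [hpow n _ hr1, hpow n _ (by linarith : 0 < r)] at this
      rwa [lintegral_const_mul' _ _ ENNReal.ofReal_ne_top,
        lintegral_const_mul' _ _ ENNReal.ofReal_ne_top, lintegral_indicator hA,
        lintegral_indicator hA, setLIntegral_const, setLIntegral_const, hmA, mul_zero, mul_zero,
        add_zero] at this
    by_contra hne
    have hlim : Tendsto (fun n : ℕ => ENNReal.ofReal r * ((n : ℝ≥0∞) ^ (r - 1) * μ A)) atTop
        (nhds (ENNReal.ofReal r * (⊤ * μ A))) := by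
      refine ENNReal.Tendsto.const_mul (ENNReal.Tendsto.mul_const ?_ (Or.inl ?_))
        (Or.inr ENNReal.ofReal_ne_top)
      · have := (ENNReal.continuous_rpow_const (y := r - 1)).tendsto ⊤
        rw [ENNReal.top_rpow_of_pos hr1] at this
        exact this.comp ENNReal.tendsto_nat_nhds_top
      · simp
    have := le_of_tendsto' hlim hb
    rw [ENNReal.top_mul hne, ENNReal.mul_top (by simp; linarith)] at this
    exact hL (top_le_iff.1 this)
  refine measure_mono_null (t := S ∪ ⋃ k, E ∩ regSet p S k) (fun x hx => ?_)
    (measure_union_null hμS (measure_iUnion_null key))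
  by_cases hxS : x ∈ S
  · exact Or.inl hxS
  · obtain ⟨k, hk⟩ := exists_mem_regSet p S hS hxS
    exact Or.inr (mem_iUnion.2 ⟨k, hx, hk⟩)

/-- The dual bound controls `∫ ρ^r dm`: test with `min(ρ, k) 1_{R^k}`. -/
lemma lintegral_rpow_le_of_dual_bound {p : X} {S : Set X} (hS : IsClosed S) {r : ℝ}
    (hr : 1 < r) (L : ℝ≥0∞) (m : Measure X) (hmS : m S = 0)
    (hmR : ∀ k, m (regSet p S k) < ⊤) (ρ : X → ℝ≥0∞) (hρ : Measurable ρ)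
    (H : ∀ (k : ℕ) (f : X → ℝ≥0), Measurable f → ∀ M : ℝ≥0, (∀ x, f x ≤ M) →
      (∀ x ∉ regSet p S k, f x = 0) →
      ∫⁻ x, ENNReal.ofReal r * (f x : ℝ≥0∞) ^ (r - 1) ∂(m.withDensity ρ)
        ≤ L + ∫⁻ x, ENNReal.ofReal (r - 1) * (f x : ℝ≥0∞) ^ r ∂m) :
    ∫⁻ x, ρ x ^ r ∂m ≤ L := by
  have hr0 : 0 < r := by linarith
  have hr1 : 0 < r - 1 := by linarith
  have hR : ∀ k, MeasurableSet (regSet p S k) := fun k => (isClosed_regSet p S k).measurableSet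
  set F : ℕ → X → ℝ≥0∞ := fun k => (regSet p S k).indicator fun x => min (ρ x) k with hF
  have hFm : ∀ k, Measurable (F k) := fun k => (hρ.min measurable_const).indicator (hR k)
  have hFk : ∀ k x, F k x ≤ k := fun k x =>
    indicator_apply_le' (fun _ => min_le_right _ _) (fun _ => zero_le)
  have hFρ : ∀ k x, F k x ≤ ρ x := fun k x =>
    indicator_apply_le' (fun _ => min_le_left _ _) (fun _ => zero_le)
  have hFtop : ∀ k x, F k x ≠ ⊤ := fun k x =>
    ne_top_of_le_ne_top (ENNReal.natCast_ne_top k) (hFk k x)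
  have hF0 : ∀ k, ∀ x ∉ regSet p S k, F k x = 0 := fun k x hx => indicator_of_notMem hx _
  have hbound : ∀ k, ∫⁻ x, F k x ^ r ∂m ≤ L := by
    intro k
    have h1 := H k (fun x => (F k x).toNNReal) (hFm k).ennreal_toNNReal k
      (fun x => by
        rw [← ENNReal.coe_le_coe, ENNReal.coe_toNNReal (hFtop k x)]
        simpa using hFk k x)
      (fun x hx => by simp [hF0 k x hx])
    simp_rw [ENNReal.coe_toNNReal (hFtop k _)] at h1
    have hFm' := hFm k
    rw [lintegral_withDensity_eq_lintegral_mul _ hρ (by fun_prop)] at h1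
    have hfin : ∫⁻ x, ENNReal.ofReal (r - 1) * F k x ^ r ∂m ≠ ⊤ := by
      refine ne_top_of_le_ne_top (b := ∫⁻ x, (regSet p S k).indicator
        (fun _ => ENNReal.ofReal (r - 1) * (k : ℝ≥0∞) ^ r) x ∂m) ?_ (lintegral_mono fun x => ?_)
      · rw [lintegral_indicator (hR k), setLIntegral_const]
        exact ENNReal.mul_ne_top (ENNReal.mul_ne_top ENNReal.ofReal_ne_top
          (ENNReal.rpow_ne_top_of_nonneg hr0.le (ENNReal.natCast_ne_top k))) (hmR k).ne
      · by_cases hx : x ∈ regSet p S k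
        · rw [indicator_of_mem hx]
          gcongr
          exact hFk k x
        · rw [hF0 k x hx, ENNReal.zero_rpow_of_pos hr0]
          simp
    have h2 : ∫⁻ x, F k x ^ r ∂m + ∫⁻ x, ENNReal.ofReal (r - 1) * F k x ^ r ∂m
        ≤ L + ∫⁻ x, ENNReal.ofReal (r - 1) * F k x ^ r ∂m := by
      refine le_trans ?_ h1
      rw [← lintegral_add_left (by fun_prop)]
      refine lintegral_mono fun x => ?_
      simp only [Pi.mul_apply]
      calc F k x ^ r + ENNReal.ofReal (r - 1) * F k x ^ r
          = ENNReal.ofReal r * F k x ^ r := by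
            nth_rewrite 1 [← one_mul (F k x ^ r)]
            rw [← add_mul, ← ENNReal.ofReal_one, ← ENNReal.ofReal_add zero_le_one hr1.le]
            congr 2
            ring
        _ = F k x * (ENNReal.ofReal r * F k x ^ (r - 1)) := by
            have : F k x ^ r = F k x ^ (r - 1) * F k x := by
              conv_lhs => rw [show r = (r - 1) + 1 by ring]
              rw [ENNReal.rpow_add_of_nonneg _ _ hr1.le zero_le_one, ENNReal.rpow_one]
            rw [this]
            ring
        _ ≤ ρ x * (ENNReal.ofReal r * F k x ^ (r - 1)) := by
            gcongr
            exact hFρ k x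
    exact (ENNReal.add_le_add_iff_right hfin).1 h2
  have hmono : ∀ x, Monotone fun k => F k x := fun x k l hkl => by
    simp only [hF]
    by_cases hx : x ∈ regSet p S k
    · rw [indicator_of_mem hx, indicator_of_mem (regSet_mono p S hkl hx)]
      gcongr
    · rw [indicator_of_notMem hx]
      exact zero_le
  have hlim : ∀ᵐ x ∂m, Tendsto (fun k => F k x ^ r) atTop (nhds (ρ x ^ r)) := by
    have hS' : ∀ᵐ x ∂m, x ∉ S := measure_eq_zero_iff_ae_notMem.1 hmS
    filter_upwards [hS'] with x hx
    obtain ⟨k₀, hk₀⟩ := exists_mem_regSet p S hS hx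
    refine (ENNReal.continuous_rpow_const.tendsto _).comp ?_
    have h1 : Tendsto (fun k : ℕ => min (ρ x) (k : ℝ≥0∞)) atTop (nhds (min (ρ x) ⊤)) :=
      tendsto_const_nhds.min ENNReal.tendsto_nat_nhds_top
    rw [min_eq_left le_top] at h1
    refine h1.congr' ?_
    filter_upwards [eventually_ge_atTop k₀] with k hk
    simp only [hF]
    rw [indicator_of_mem (regSet_mono p S hk hk₀)]
  exact le_of_tendsto' (lintegral_tendsto_of_tendsto_of_monotone
    (fun k => ((hFm k).pow_const r).aemeasurable)
    (Eventually.of_forall fun x k l hkl => ENNReal.rpow_le_rpow (hmono x hkl) hr0.le) hlim) hbound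

end conclusion

/-- Joint lower semicontinuity of the Rényi entropy `S_{N,·}(·)`,
`N < 0`, along a sequence of quasi-Radon reference measures `m_n` (vanishing on the
closed singular set `S` with empty interior, finite on the regular sets `R^k`, and
converging against bounded continuous functions with bounded support vanishing near `S`)
and a weakly converging sequence of probability measures `μ_n` with `μ_n(S) = 0`. -/
theorem renyiEntropy_lsc
    {X : Type*} [MetricSpace X] [CompleteSpace X]
    [TopologicalSpace.SeparableSpace X] [MeasurableSpace X] [BorelSpace X]
    (p : X) (S : Set X) (hS : IsClosed S) (hSint : interior S = ∅)
    (N : ℝ) (hN : N < 0)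
    (m : ℕ → Measure X) (mLim : Measure X)
    (μ : ℕ → Measure X) (μLim : Measure X)
    (hμprob : ∀ n, IsProbabilityMeasure (μ n)) (hμLimprob : IsProbabilityMeasure μLim)
    (hmS : ∀ n, m n S = 0) (hmLimS : mLim S = 0)
    (hmR : ∀ n k, m n (regSet p S k) < ⊤) (hmLimR : ∀ k, mLim (regSet p S k) < ⊤)
    (hμS : ∀ n, μ n S = 0) (hμLimS : μLim S = 0)
    (hmconv : ∀ f : X → ℝ, Continuous f → (∃ C : ℝ, ∀ x, |f x| ≤ C) →
      Bornology.IsBounded (Function.support f) →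
      (∃ U : Set X, IsOpen U ∧ S ⊆ U ∧ ∀ x ∈ U, f x = 0) →
      Tendsto (fun n => ∫ x, f x ∂(m n)) atTop (nhds (∫ x, f x ∂mLim)))
    (hμconv : ∀ g : X → ℝ, Continuous g → (∃ C : ℝ, ∀ x, |g x| ≤ C) →
      Tendsto (fun n => ∫ x, g x ∂(μ n)) atTop (nhds (∫ x, g x ∂μLim))) :
    renyiEntropy N mLim μLim ≤ atTop.liminf (fun n => renyiEntropy N (m n) (μ n)) := by
  have hr : 1 < 1 - 1 / N := by
    have : 1 / N < 0 := one_div_neg.mpr hN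
    linarith
  set L := atTop.liminf (fun n => renyiEntropy N (m n) (μ n)) with hLdef
  rcases eq_or_ne L ⊤ with hL | hL
  · rw [hL]
    exact le_top
  have H : ∀ (k : ℕ) (f : X → ℝ≥0), Measurable f → ∀ M : ℝ≥0, (∀ x, f x ≤ M) →
      (∀ x ∉ regSet p S k, f x = 0) →
      ∫⁻ x, ENNReal.ofReal (1 - 1 / N) * (f x : ℝ≥0∞) ^ (1 - 1 / N - 1) ∂μLim
        ≤ L + ∫⁻ x, ENNReal.ofReal (1 - 1 / N - 1) * (f x : ℝ≥0∞) ^ (1 - 1 / N) ∂mLim :=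
    fun k f hf M hM h0 => dual_bound_measurable hr L mLim μLim hmLimR
      (fun k f hf M hM h0 => dual_bound_continuous hN m mLim μ μLim hμprob hμLimprob hmR hmLimR
        hmconv hμconv k hf M hM h0) k hf M hM h0
  have hac : μLim ≪ mLim := absolutelyContinuous_of_dual_bound hS hr hL mLim μLim hμLimS H
  have : SigmaFinite mLim := sigmaFinite_of_regSet hS mLim hmLimS hmLimR
  have hex : ∃ ρ : X → ℝ≥0∞, Measurable ρ ∧ μLim = mLim.withDensity ρ :=
    ⟨_, Measure.measurable_rnDeriv _ _, (Measure.withDensity_rnDeriv_eq _ _ hac).symm⟩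
  unfold renyiEntropy
  rw [dif_pos hex]
  refine lintegral_rpow_le_of_dual_bound hS hr L mLim hmLimS hmLimR _ hex.choose_spec.1 ?_
  rw [← hex.choose_spec.2]
  exact H
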